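/- Let f ∈ L¹(ℝ²) satisfy ∫_{ℝ²} |f(y)| ln(2+|y|) dy < ∞ and ∫_{ℝ²} f dy = 0, and suppose f ∈ L^p_loc(ℝ²) for some p > 1. Then w(x) = -(1/2π)∫_{ℝ²} ln|x-y| f(y) dy defines a continuous function on ℝ² solving -Δw = f in the distributional sense, and w(x) → 0 as |x| → ∞ provided additionally ∫ |f(x)|^{p}(1+|x|)^{2βp+2(p-1)} dx < ∞ for some β > 0. -/

import Mathlib

open MeasureTheory Real Filter
noncomputable section
abbrev E2 : Type := EuclideanSpace ℝ (Fin 2)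
/-- Classical Laplacian on ℝ². -/
def lap (u : E2 → ℝ) (x : E2) : ℝ :=
  ∑ i : Fin 2, fderiv ℝ (fun y => fderiv ℝ u y (EuclideanSpace.single i 1)) x (EuclideanSpace.single i 1)
/-- The set of admissible exponents α in the definition of α_p(K). -/
def alphaSet (K : E2 → ℝ) (p : ℝ) : Set ℝ :=
  {α : ℝ | Integrable (fun x : E2 => |K x| ^ p * (1 + ‖x‖) ^ (2*α*p + 2*(p-1)))}
/-- α_p(K), with the convention sup ∅ = -∞ (⊥ in `EReal`). -/
def alphaP (K : E2 → ℝ) (p : ℝ) : EReal :=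
  sSup ((fun a : ℝ => (a : EReal)) '' alphaSet K p)
open scoped Topology

def kk (z : E2) : ℝ := log⁺ ‖z‖⁻¹

lemma kk_nonneg (z : E2) : 0 ≤ kk z := posLog_nonneg

lemma kk_meas : Measurable kk := by
  unfold kk
  exact continuous_posLog.measurable.comp (measurable_norm.inv)

lemma kk_zero_of_one_le {z : E2} (h : 1 ≤ ‖z‖) : kk z = 0 := by
  unfold kk
  rw [posLog_eq_zero_iff, abs_of_nonneg (by positivity)]
  exact inv_le_one_of_one_le₀ h

lemma log_eq (t : E2) : log ‖t‖ = log⁺ ‖t‖ - kk t := posLog_sub_posLog_inv.symm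

lemma finrank_E2 : Module.finrank ℝ E2 = 2 := by simp

lemma kk_pow_integrable (q : ℝ) (hq : 0 < q) : Integrable (fun z => kk z ^ q) := by
  unfold kk
  rw [integrable_fun_norm_addHaar (volume : Measure E2) (f := fun r : ℝ => (log⁺ r⁻¹) ^ q)]
  rw [finrank_E2]
  have hg : IntegrableOn ((Set.Ioc (0:ℝ) 1).indicator (fun _ => q ^ q)) (Set.Ioi 0) := by
    refine Integrable.integrableOn ?_
    rw [integrable_indicator_iff measurableSet_Ioc]
    exact integrableOn_const (by simp)
  refine hg.mono' ?_ ?_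
  · refine Measurable.aestronglyMeasurable ?_
    have := continuous_posLog.measurable
    fun_prop
  · refine (ae_restrict_iff' measurableSet_Ioi).2 (ae_of_all _ fun r hr => ?_)
    have hr : 0 < r := hr
    have h0 : 0 ≤ log⁺ r⁻¹ := posLog_nonneg
    have h0' : 0 ≤ (log⁺ r⁻¹)^q := by positivity
    simp only [smul_eq_mul, norm_mul, Real.norm_eq_abs, abs_of_nonneg h0']
    by_cases h1 : r ≤ 1
    · rw [Set.indicator_of_mem (by exact ⟨hr, h1⟩)]
      have h2 : log⁺ r⁻¹ ≤ q * r⁻¹ ^ (1/q) := by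
        rw [posLog_eq_log (by rw [abs_of_pos (by positivity)]; exact (one_le_inv₀ hr).2 h1)]
        have := Real.log_le_rpow_div (x := r⁻¹) (by positivity) (ε := 1/q) (by positivity)
        calc _ ≤ _ := this
          _ = _ := by field_simp
      have h3 : (log⁺ r⁻¹)^q ≤ q ^ q * r⁻¹ := by
        calc _ ≤ (q * r⁻¹ ^ (1/q))^q := by gcongr
          _ = _ := by
            rw [Real.mul_rpow (by positivity) (by positivity), ← Real.rpow_mul (by positivity)]
            rw [one_div_mul_cancel hq.ne', Real.rpow_one]
      simp only [abs_of_pos (pow_pos hr _)]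
      calc _ ≤ r ^ (2-1) * (q ^ q * r⁻¹) := by gcongr
        _ = _ := by norm_num; field_simp
    · rw [Set.indicator_of_notMem (by intro h; exact h1 h.2)]
      have : log⁺ r⁻¹ = 0 := by
        rw [posLog_eq_zero_iff, abs_of_nonneg (by positivity)]
        exact inv_le_one_of_one_le₀ (by linarith)
      rw [this, Real.zero_rpow hq.ne', mul_zero]

def ke (e : ℝ) (z : E2) : ℝ := (Metric.ball (0:E2) e).indicator kk z

lemma ke_nonneg (e : ℝ) (z : E2) : 0 ≤ ke e z := Set.indicator_nonneg (fun z _ => kk_nonneg z) z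
lemma ke_le (e : ℝ) (z : E2) : ke e z ≤ kk z := Set.indicator_le_self' (fun z _ => kk_nonneg z) z
lemma ke_meas (e : ℝ) : Measurable (ke e) := kk_meas.indicator Metric.isOpen_ball.measurableSet
lemma ke_one : ke 1 = kk := by
  funext z
  unfold ke
  by_cases h : z ∈ Metric.ball (0:E2) 1
  · rw [Set.indicator_of_mem h]
  · rw [Set.indicator_of_notMem h, kk_zero_of_one_le]; simpa using h

lemma ke_memLp (e q : ℝ) (hq : 1 < q) : MemLp (ke e) (ENNReal.ofReal q) := by
  have h0 : 0 < q := by linarith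
  rw [← integrable_norm_rpow_iff (ke_meas e).aestronglyMeasurable (by simpa using h0) (by simp)]
  rw [ENNReal.toReal_ofReal h0.le]
  refine (kk_pow_integrable q h0).mono' ?_ ?_
  · have := ke_meas e
    exact (by fun_prop : Measurable (fun x => ‖ke e x‖ ^ q)).aestronglyMeasurable
  · refine ae_of_all _ fun z => ?_
    have := ke_nonneg e z
    rw [Real.norm_eq_abs, abs_of_nonneg (by positivity), Real.norm_eq_abs, abs_of_nonneg this]
    gcongr
    exact ke_le e z

lemma ke_tendsto (q : ℝ) (hq : 1 < q) :
    Tendsto (fun n : ℕ => (∫ z, ke (1/((n:ℝ)+1)) z ^ q) ^ (1/q)) atTop (𝓝 0) := by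
  have h0 : 0 < q := by linarith
  have : Tendsto (fun n : ℕ => (∫ z, ke (1/((n:ℝ)+1)) z ^ q)) atTop (𝓝 (∫ z : E2, (0:ℝ))) := by
    refine tendsto_integral_of_dominated_convergence (fun z => kk z ^ q) ?_ 
      (kk_pow_integrable q h0) ?_ ?_
    · intro n
      have := ke_meas (1/((n:ℝ)+1))
      exact (by fun_prop : Measurable (fun x => ke (1/((n:ℝ)+1)) x ^ q)).aestronglyMeasurable
    · refine fun n => ae_of_all _ fun z => ?_
      have := ke_nonneg (1/((n:ℝ)+1)) z
      rw [Real.norm_eq_abs, abs_of_nonneg (by positivity)]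
      gcongr
      exact ke_le _ z
    · have : ∀ᵐ z : E2, z ≠ 0 := by simp [ae_iff]
      filter_upwards [this] with z hz
      have h1 := (tendsto_one_div_add_atTop_nhds_zero_nat (𝕜 := ℝ)).eventually_lt_const
        (norm_pos_iff.2 hz)
      refine tendsto_const_nhds.congr' ?_
      filter_upwards [h1] with n hn
      unfold ke
      rw [Set.indicator_of_notMem, Real.zero_rpow h0.ne']
      simp only [Metric.mem_ball, dist_zero_right, not_lt]
      exact hn.le
  rw [integral_zero] at this
  have h2 := this.rpow_const (p := 1/q) (Or.inr (by positivity))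
  rwa [Real.zero_rpow (by positivity)] at h2

lemma holder_ke (f : E2 → ℝ) (hmeas : Measurable f) (p q : ℝ) (hpq : p.HolderConjugate q)
    (hloc : ∀ s : Set E2, IsCompact s → IntegrableOn (fun x => |f x| ^ p) s)
    (e : ℝ) (he : e ≤ 1) (x : E2) :
    Integrable (fun y => ke e (x - y) * |f y|) ∧
    ∫ y, ke e (x - y) * |f y| ≤
      (∫ z, ke e z ^ q) ^ (1/q) * (∫ y in Metric.ball x 1, |f y| ^ p) ^ (1/p) := by
  have hp := hpq.lt
  have hq := hpq.symm.lt
  set g : E2 → ℝ := (Metric.ball x 1).indicator (fun y => |f y|) with hg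
  have hgm : Measurable g := (hmeas.abs).indicator Metric.isOpen_ball.measurableSet
  have hgp : ∀ y, g y ^ p = (Metric.ball x 1).indicator (fun y => |f y| ^ p) y := by
    intro y
    by_cases h : y ∈ Metric.ball x 1
    · simp [hg, Set.indicator_of_mem h]
    · rw [hg, Set.indicator_of_notMem h, Set.indicator_of_notMem h, Real.zero_rpow (by linarith)]
  have hg0 : ∀ y, 0 ≤ g y := fun y => Set.indicator_nonneg (fun z _ => abs_nonneg _) y
  have hgL : MemLp g (ENNReal.ofReal p) := by
    rw [← integrable_norm_rpow_iff hgm.aestronglyMeasurable (by simpa using (by linarith)) (by simp)]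
    rw [ENNReal.toReal_ofReal (by linarith)]
    simp only [Real.norm_eq_abs, abs_of_nonneg (hg0 _), hgp]
    rw [integrable_indicator_iff Metric.isOpen_ball.measurableSet]
    exact (hloc _ (isCompact_closedBall x 1)).mono_set Metric.ball_subset_closedBall
  have hkL : MemLp (fun y => ke e (x - y)) (ENNReal.ofReal q) :=
    (ke_memLp e q hq).comp_measurePreserving (Measure.measurePreserving_sub_left volume x)
  have heq : ∀ y, ke e (x - y) * |f y| = ke e (x - y) * g y := by
    intro y
    by_cases h : y ∈ Metric.ball x 1
    · simp [hg, Set.indicator_of_mem h]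
    · have : ke e (x - y) = 0 := by
        unfold ke
        rw [Set.indicator_of_notMem]
        simp only [Metric.mem_ball, dist_zero_right, not_lt] at h ⊢
        rw [dist_eq_norm] at h
        rw [norm_sub_rev]; linarith
      simp [this]
  simp only [heq]
  have := integral_mul_le_Lp_mul_Lq_of_nonneg hpq.symm (μ := volume) (f := fun y => ke e (x - y))
    (g := g) (ae_of_all _ fun y => ke_nonneg _ _) (ae_of_all _ hg0) hkL hgL
  constructor
  · have hh : ENNReal.HolderConjugate (ENNReal.ofReal q) (ENNReal.ofReal p) :=
      hpq.symm.ennrealOfReal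
    exact hkL.integrable_mul hgL
  · refine this.trans (le_of_eq ?_)
    simp only [hgp]
    rw [integral_indicator Metric.isOpen_ball.measurableSet]
    rw [integral_sub_left_eq_self (fun z => ke e z ^ q) volume x]

instance cocomp_cg : (cocompact E2).IsCountablyGenerated := by
  rw [← Metric.cobounded_eq_cocompact, ← comap_norm_atTop]
  infer_instance

lemma pl_bound (x y : E2) : log⁺ ‖x - y‖ ≤ log (2 + ‖x‖) + log (2 + ‖y‖) := by
  have hx := norm_nonneg x
  have hy := norm_nonneg y
  rw [posLog_eq_log_max_one (norm_nonneg _), ← Real.log_mul (by positivity) (by positivity)]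
  refine Real.log_le_log (by positivity) (max_le ?_ ?_)
  · nlinarith [mul_nonneg hx hy]
  · nlinarith [mul_nonneg hx hy, norm_sub_le x y]

lemma pl_bound2 (x y : E2) : |log⁺ ‖x - y‖ - log (2 + ‖x‖)| ≤ 2 * log (2 + ‖y‖) := by
  have hx := norm_nonneg x
  have hy := norm_nonneg y
  have hl : 0 ≤ log (2 + ‖y‖) := Real.log_nonneg (by linarith)
  rw [abs_le]
  constructor
  · rw [posLog_eq_log_max_one (norm_nonneg _)]
    have : log (2 + ‖x‖) ≤ log ((2 + ‖y‖)^2 * max 1 ‖x - y‖) := by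
      refine Real.log_le_log (by positivity) ?_
      have h1 : ‖x‖ ≤ ‖x - y‖ + ‖y‖ := by simpa using norm_add_le (x - y) y
      have h2 := le_max_left 1 ‖x - y‖
      have h3 := le_max_right 1 ‖x - y‖
      set m := max 1 ‖x - y‖
      calc 2 + ‖x‖ ≤ (2 + ‖y‖) * m + (2 + ‖y‖) * m := by nlinarith
        _ ≤ _ := by nlinarith [mul_nonneg (by linarith : 0 ≤ 2 + ‖y‖) (by linarith : 0 ≤ m)]
    rw [Real.log_mul (by positivity) (by positivity), Real.log_pow] at this
    push_cast at this
    linarith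
  · linarith [pl_bound x y]

lemma pl_tendsto (y : E2) :
    Tendsto (fun x : E2 => log⁺ ‖x - y‖ - log (2 + ‖x‖)) (cocompact E2) (𝓝 0) := by
  have hn : Tendsto (fun x : E2 => 2 + ‖x‖) (cocompact E2) atTop :=
    tendsto_atTop_add_const_left _ _ (tendsto_norm_cocompact_atTop (E := E2))
  have h1 : Tendsto (fun x : E2 => (3 + ‖y‖) / (2 + ‖x‖)) (cocompact E2) (𝓝 0) :=
    hn.const_div_atTop _
  have h2 : Tendsto (fun x : E2 => max 1 ‖x - y‖ / (2 + ‖x‖) - 1) (cocompact E2) (𝓝 0) := by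
    refine squeeze_zero_norm (fun x => ?_) h1
    have hx := norm_nonneg x
    have hy := norm_nonneg y
    have : max 1 ‖x - y‖ / (2 + ‖x‖) - 1 = (max 1 ‖x - y‖ - (2 + ‖x‖)) / (2 + ‖x‖) := by
      field_simp
    rw [this, norm_div, Real.norm_eq_abs, Real.norm_eq_abs, abs_of_pos (a := 2 + ‖x‖) (by positivity)]
    gcongr
    have h1 : ‖x‖ ≤ ‖x - y‖ + ‖y‖ := by simpa using norm_add_le (x - y) y
    have h2 := le_max_right 1 ‖x - y‖
    have h3 : max 1 ‖x - y‖ ≤ 1 + ‖x - y‖ := max_le (by linarith [norm_nonneg (x-y)]) (by linarith)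
    rw [abs_le]
    constructor
    · linarith
    · linarith [norm_sub_le x y]
  have h3 : Tendsto (fun x : E2 => max 1 ‖x - y‖ / (2 + ‖x‖)) (cocompact E2) (𝓝 1) := by
    simpa using h2.add_const 1
  have h4 := h3.log one_ne_zero
  rw [Real.log_one] at h4
  refine h4.congr fun x => ?_
  rw [Real.log_div (by positivity) (by positivity), posLog_eq_log_max_one (norm_nonneg _)]

lemma A_meas (f : E2 → ℝ) (hmeas : Measurable f) (x : E2) :
    Measurable (fun y => log⁺ ‖x - y‖ * f y) := by
  have := continuous_posLog.measurable
  fun_prop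

lemma A_int (f : E2 → ℝ) (hmeas : Measurable f) (hf : Integrable f)
    (hlog : Integrable (fun y : E2 => |f y| * log (2 + ‖y‖))) (x : E2) :
    Integrable (fun y => log⁺ ‖x - y‖ * f y) := by
  refine ((hf.abs.const_mul (log (2 + ‖x‖))).add hlog).mono' (A_meas f hmeas x).aestronglyMeasurable
    (ae_of_all _ fun y => ?_)
  rw [norm_mul, Real.norm_eq_abs, Real.norm_eq_abs, abs_of_nonneg posLog_nonneg]
  calc _ ≤ (log (2 + ‖x‖) + log (2 + ‖y‖)) * |f y| := by gcongr; exact pl_bound x y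
    _ = _ := by simp only [Pi.add_apply]; ring

lemma A_cont (f : E2 → ℝ) (hmeas : Measurable f) (hf : Integrable f)
    (hlog : Integrable (fun y : E2 => |f y| * log (2 + ‖y‖))) :
    Continuous (fun x : E2 => ∫ y, log⁺ ‖x - y‖ * f y) := by
  rw [continuous_iff_continuousAt]
  intro x0
  refine continuousAt_of_dominated (bound := fun y => log (2 + (‖x0‖ + 1)) * |f y| + |f y| * log (2 + ‖y‖))
    (Eventually.of_forall fun x => (A_meas f hmeas x).aestronglyMeasurable) ?_
    ((hf.abs.const_mul _).add hlog) (ae_of_all _ fun y => ?_)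
  · filter_upwards [Metric.ball_mem_nhds x0 one_pos] with x hx
    refine ae_of_all _ fun y => ?_
    rw [norm_mul, Real.norm_eq_abs, Real.norm_eq_abs, abs_of_nonneg posLog_nonneg]
    have hx' : ‖x‖ ≤ ‖x0‖ + 1 := by
      rw [Metric.mem_ball, dist_eq_norm] at hx
      have : ‖x‖ ≤ ‖x - x0‖ + ‖x0‖ := by simpa using norm_add_le (x - x0) x0
      linarith
    calc _ ≤ (log (2 + (‖x0‖ + 1)) + log (2 + ‖y‖)) * |f y| := by
          gcongr
          refine (pl_bound x y).trans ?_
          gcongr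
      _ = _ := by ring
  · have := continuous_posLog
    exact Continuous.continuousAt (by fun_prop)

lemma A_tendsto (f : E2 → ℝ) (hmeas : Measurable f) (hf : Integrable f)
    (hlog : Integrable (fun y : E2 => |f y| * log (2 + ‖y‖))) (hzero : ∫ y, f y = 0) :
    Tendsto (fun x : E2 => ∫ y, log⁺ ‖x - y‖ * f y) (cocompact E2) (𝓝 0) := by
  have h1 : ∀ x : E2, ∫ y, log⁺ ‖x - y‖ * f y = ∫ y, (log⁺ ‖x - y‖ - log (2 + ‖x‖)) * f y := by
    intro x
    simp only [sub_mul]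
    rw [integral_sub (A_int f hmeas hf hlog x) (hf.const_mul _), integral_const_mul, hzero]
    simp
  simp only [h1]
  rw [← integral_zero E2 ℝ]
  refine tendsto_integral_filter_of_dominated_convergence (fun y => 2 * (|f y| * log (2 + ‖y‖))) ?_ ?_
    (hlog.const_mul 2) ?_
  · refine Eventually.of_forall fun x => Measurable.aestronglyMeasurable ?_
    have := continuous_posLog.measurable
    fun_prop
  · refine Eventually.of_forall fun x => ae_of_all _ fun y => ?_
    rw [norm_mul, Real.norm_eq_abs, Real.norm_eq_abs]
    calc _ ≤ 2 * log (2 + ‖y‖) * |f y| := by gcongr; exact pl_bound2 x y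
      _ = _ := by ring
  · refine ae_of_all _ fun y => ?_
    simpa using (pl_tendsto y).mul_const (f y)

def kap (e : ℝ) (z : E2) : ℝ := log⁺ (max ‖z‖ e)⁻¹

lemma kap_cont (e : ℝ) (he : 0 < e) : Continuous (kap e) := by
  unfold kap
  refine continuous_posLog.comp (Continuous.inv₀ (by fun_prop) fun z => ?_)
  exact (lt_of_lt_of_le he (le_max_right _ _)).ne'

lemma kap_bound (e : ℝ) (he : 0 < e) (z : E2) : |kap e z| ≤ log⁺ e⁻¹ := by
  unfold kap
  rw [abs_of_nonneg posLog_nonneg]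
  refine posLog_le_posLog (by positivity) ?_
  gcongr
  exact le_max_right _ _

lemma kap_diff (e : ℝ) (he : 0 < e) (z : E2) (hz : z ≠ 0) : |kk z - kap e z| ≤ ke e z := by
  have hz' := norm_pos_iff.2 hz
  unfold ke
  by_cases h : ‖z‖ < e
  · rw [Set.indicator_of_mem (by simpa using h)]
    have h1 : kap e z ≤ kk z := by
      unfold kap kk
      refine posLog_le_posLog (by positivity) ?_
      gcongr
      exact le_max_left _ _
    have h2 : 0 ≤ kap e z := posLog_nonneg
    rw [abs_le]; constructor <;> linarith
  · rw [Set.indicator_of_notMem (by simpa using h)]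
    unfold kap kk
    rw [max_eq_left (by linarith)]; simp

lemma B_int (f : E2 → ℝ) (hmeas : Measurable f) (p : ℝ) (hp : 1 < p)
    (hloc : ∀ s : Set E2, IsCompact s → IntegrableOn (fun x => |f x| ^ p) s) (x : E2) :
    Integrable (fun y => kk (x - y) * f y) := by
  have := (holder_ke f hmeas p _ (Real.HolderConjugate.conjExponent hp) hloc 1 le_rfl x).1
  rw [ke_one] at this
  refine this.mono' ?_ ?_
  · refine Measurable.aestronglyMeasurable ?_
    have := kk_meas
    fun_prop
  · refine ae_of_all _ fun y => ?_
    rw [norm_mul, Real.norm_eq_abs, Real.norm_eq_abs, abs_of_nonneg (kk_nonneg _)]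

lemma Bap_int (f : E2 → ℝ) (hf : Integrable f) (e : ℝ) (he : 0 < e) (x : E2) :
    Integrable (fun y => kap e (x - y) * f y) := by
  refine hf.bdd_mul (c := log⁺ e⁻¹) ?_ ?_
  · have := kap_cont e he
    exact (by fun_prop : Continuous fun y => kap e (x - y)).aestronglyMeasurable
  · exact ae_of_all _ fun y => kap_bound e he _

lemma Bap_cont (f : E2 → ℝ) (hmeas : Measurable f) (hf : Integrable f) (e : ℝ) (he : 0 < e) :
    Continuous (fun x : E2 => ∫ y, kap e (x - y) * f y) := by
  refine continuous_of_dominated (bound := fun y => log⁺ e⁻¹ * |f y|)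
    (fun x => (Bap_int f hf e he x).1) ?_ (hf.abs.const_mul _) (ae_of_all _ fun y => ?_)
  · refine fun x => ae_of_all _ fun y => ?_
    rw [norm_mul, Real.norm_eq_abs, Real.norm_eq_abs]
    gcongr
    exact kap_bound e he _
  · have := kap_cont e he
    fun_prop

lemma B_diff (f : E2 → ℝ) (hmeas : Measurable f) (hf : Integrable f) (p q : ℝ)
    (hpq : p.HolderConjugate q)
    (hloc : ∀ s : Set E2, IsCompact s → IntegrableOn (fun x => |f x| ^ p) s)
    (e : ℝ) (he0 : 0 < e) (he : e ≤ 1) (x : E2) :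
    |(∫ y, kk (x - y) * f y) - ∫ y, kap e (x - y) * f y| ≤
      (∫ z, ke e z ^ q) ^ (1/q) * (∫ y in Metric.ball x 1, |f y| ^ p) ^ (1/p) := by
  obtain ⟨h1, h2⟩ := holder_ke f hmeas p q hpq hloc e he x
  refine le_trans ?_ h2
  rw [← integral_sub (B_int f hmeas p hpq.lt hloc x) (Bap_int f hf e he0 x), ← Real.norm_eq_abs]
  refine norm_integral_le_of_norm_le h1 ?_
  have : ∀ᵐ y : E2, y ≠ x := by simp [ae_iff]
  filter_upwards [this] with y hy
  rw [← sub_mul, norm_mul, Real.norm_eq_abs, Real.norm_eq_abs]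
  gcongr
  exact kap_diff e he0 _ (sub_ne_zero.2 hy.symm)

lemma B_cont (f : E2 → ℝ) (hmeas : Measurable f) (hf : Integrable f) (p : ℝ) (hp : 1 < p)
    (hloc : ∀ s : Set E2, IsCompact s → IntegrableOn (fun x => |f x| ^ p) s) :
    Continuous (fun x : E2 => ∫ y, kk (x - y) * f y) := by
  have hpq := Real.HolderConjugate.conjExponent hp
  set q := p.conjExponent
  refine continuous_of_locally_uniform_approx_of_continuousAt fun x0 u hu => ?_
  obtain ⟨δ, hδ, hu⟩ := Metric.mem_uniformity_dist.1 hu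
  set N := (∫ y in Metric.closedBall x0 2, |f y| ^ p) ^ (1/p) with hN
  have h1 : Tendsto (fun n : ℕ => (∫ z, ke (1/((n:ℝ)+1)) z ^ q) ^ (1/q) * N) atTop (𝓝 0) := by
    simpa using (ke_tendsto q hpq.symm.lt).mul_const N
  obtain ⟨n, hn⟩ := (h1.eventually_lt_const hδ).exists
  refine ⟨Metric.ball x0 1, Metric.ball_mem_nhds _ one_pos,
    fun x => ∫ y, kap (1/((n:ℝ)+1)) (x - y) * f y, ?_, fun x hx => hu ?_⟩
  · exact (Bap_cont f hmeas hf _ (by positivity)).continuousAt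
  · rw [Real.dist_eq]
    refine lt_of_le_of_lt (B_diff f hmeas hf p q hpq hloc _ (by positivity) ?_ x) (lt_of_le_of_lt ?_ hn)
    · rw [div_le_one (by positivity)]; linarith [(n.cast_nonneg : (0:ℝ) ≤ n)]
    · have hb : Metric.ball x 1 ⊆ Metric.closedBall x0 2 := by
        intro z hz
        simp only [Metric.mem_ball, Metric.mem_closedBall] at *
        linarith [dist_triangle z x x0]
      have hp0 : 0 ≤ 1/p := by positivity
      have h0 : 0 ≤ ∫ y in Metric.ball x 1, |f y| ^ p := integral_nonneg fun y => by positivity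
      have h3 : 0 ≤ ∫ z, ke (1/((n:ℝ)+1)) z ^ q := integral_nonneg fun y => by
        have := ke_nonneg (1/((n:ℝ)+1)) y
        positivity
      rw [hN]
      gcongr
      · exact ae_of_all _ fun y => by positivity
      · exact hloc _ (isCompact_closedBall _ _)

lemma B_tendsto (f : E2 → ℝ) (hmeas : Measurable f) (hf : Integrable f) (p : ℝ) (hp : 1 < p)
    (hglob : Integrable (fun x => |f x| ^ p)) :
    Tendsto (fun x : E2 => ∫ y, kk (x - y) * f y) (cocompact E2) (𝓝 0) := by
  have hloc : ∀ s : Set E2, IsCompact s → IntegrableOn (fun x => |f x| ^ p) s :=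
    fun s _ => hglob.integrableOn
  have hpq := Real.HolderConjugate.conjExponent hp
  set q := p.conjExponent
  have hb : ∀ x, ‖∫ y, kk (x - y) * f y‖ ≤
      (∫ z, ke 1 z ^ q) ^ (1/q) * (∫ y in Metric.ball x 1, |f y| ^ p) ^ (1/p) := by
    intro x
    obtain ⟨h1, h2⟩ := holder_ke f hmeas p q hpq hloc 1 le_rfl x
    refine le_trans ?_ h2
    refine norm_integral_le_of_norm_le h1 (ae_of_all _ fun y => ?_)
    rw [ke_one, norm_mul, Real.norm_eq_abs, Real.norm_eq_abs, abs_of_nonneg (kk_nonneg _)]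
  refine squeeze_zero_norm hb ?_
  have h1 : Tendsto (fun x : E2 => ∫ y in Metric.ball x 1, |f y| ^ p) (cocompact E2) (𝓝 0) := by
    simp only [← integral_indicator (Metric.isOpen_ball.measurableSet : MeasurableSet (Metric.ball (_:E2) 1))]
    rw [← integral_zero E2 ℝ]
    refine tendsto_integral_filter_of_dominated_convergence (fun y => |f y| ^ p) ?_ ?_
      hglob ?_
    · exact Eventually.of_forall fun x =>
        (hglob.indicator (Metric.isOpen_ball.measurableSet)).1
    · refine Eventually.of_forall fun x => ae_of_all _ fun y => ?_
      refine (norm_indicator_le_norm_self _ _).trans (le_of_eq ?_)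
      rw [Real.norm_eq_abs, abs_of_nonneg (by positivity)]
    · refine ae_of_all _ fun y => tendsto_const_nhds.congr' ?_
      have := (isCompact_closedBall y 1).compl_mem_cocompact
      filter_upwards [this] with x hx
      rw [Set.indicator_of_notMem]
      simp only [Set.mem_compl_iff, Metric.mem_closedBall, not_le, Metric.mem_ball, not_lt] at *
      rw [dist_comm]; exact hx.le
  have h2 := (h1.rpow_const (p := 1/p) (Or.inr (by positivity))).const_mul ((∫ z, ke 1 z ^ q) ^ (1/q))
  rw [Real.zero_rpow (by positivity), mul_zero] at h2
  exact h2

lemma w_split (f : E2 → ℝ) (hmeas : Measurable f) (hf : Integrable f)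
    (hlog : Integrable (fun y : E2 => |f y| * log (2 + ‖y‖))) (p : ℝ) (hp : 1 < p)
    (hloc : ∀ s : Set E2, IsCompact s → IntegrableOn (fun x => |f x| ^ p) s) (x : E2) :
    ∫ y : E2, log ‖x - y‖ * f y = (∫ y, log⁺ ‖x - y‖ * f y) - ∫ y, kk (x - y) * f y := by
  rw [← integral_sub (A_int f hmeas hf hlog x) (B_int f hmeas p hp hloc x)]
  congr 1; funext y
  rw [log_eq]; ring

lemma glob_of_weight (f : E2 → ℝ) (hmeas : Measurable f) (p : ℝ) (hp : 1 < p) (β : ℝ) (hβ : 0 < β)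
    (h : Integrable (fun x : E2 => |f x| ^ p * (1 + ‖x‖) ^ (2*β*p + 2*(p-1)))) :
    Integrable (fun x => |f x| ^ p) := by
  refine h.mono' (Measurable.aestronglyMeasurable (by fun_prop)) (ae_of_all _ fun x => ?_)
  rw [Real.norm_eq_abs, abs_of_nonneg (by positivity)]
  have h1 : 1 ≤ (1 + ‖x‖) ^ (2*β*p + 2*(p-1)) := by
    refine Real.one_le_rpow (by linarith [norm_nonneg x]) ?_
    have : 0 < β * p := by positivity
    nlinarith
  have h2 : 0 ≤ |f x| ^ p := by positivity
  nlinarith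

lemma ibp1 (u ψ : E2 → ℝ) (hu : ContDiff ℝ 1 u) (hψ : ContDiff ℝ 1 ψ) (hc : HasCompactSupport ψ)
    (v : E2) : ∫ x, u x * fderiv ℝ ψ x v = - ∫ x, fderiv ℝ u x v * ψ x := by
  have hu' : Continuous (fun x => fderiv ℝ u x v) := (hu.continuous_fderiv one_ne_zero).clm_apply continuous_const
  have hψ' : Continuous (fun x => fderiv ℝ ψ x v) := (hψ.continuous_fderiv one_ne_zero).clm_apply continuous_const
  have hc' : HasCompactSupport (fun x => fderiv ℝ ψ x v) := hc.fderiv_apply ℝ v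
  refine integral_mul_fderiv_eq_neg_fderiv_mul_of_integrable ?_ ?_ ?_
    (fun x _ => hu.differentiable one_ne_zero x) (fun x _ => hψ.differentiable one_ne_zero x)
  · exact (hu'.mul hψ.continuous).integrable_of_hasCompactSupport hc.mul_left
  · exact (hu.continuous.mul hψ').integrable_of_hasCompactSupport hc'.mul_left
  · exact (hu.continuous.mul hψ.continuous).integrable_of_hasCompactSupport hc.mul_left

lemma cd_fderiv (u : E2 → ℝ) (hu : ContDiff ℝ 2 u) (v : E2) :
    ContDiff ℝ 1 (fun x => fderiv ℝ u x v) :=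
  (hu.fderiv_right (m := 1) (by norm_num)).clm_apply contDiff_const

lemma cont_dd (u : E2 → ℝ) (hu : ContDiff ℝ 2 u) (v : E2) :
    Continuous (fun x => fderiv ℝ (fun y => fderiv ℝ u y v) x v) :=
  ((cd_fderiv u hu v).continuous_fderiv one_ne_zero).clm_apply continuous_const

lemma cont_lap (u : E2 → ℝ) (hu : ContDiff ℝ 2 u) : Continuous (lap u) := by
  unfold lap
  exact continuous_finset_sum _ fun i _ => cont_dd u hu _

lemma supp_lap (u : E2 → ℝ) (hc : HasCompactSupport u) : HasCompactSupport (lap u) := by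
  have : lap u = fun x => fderiv ℝ (fun y => fderiv ℝ u y (EuclideanSpace.single 0 1)) x (EuclideanSpace.single 0 1)
    + fderiv ℝ (fun y => fderiv ℝ u y (EuclideanSpace.single 1 1)) x (EuclideanSpace.single 1 1) := by
    funext x; simp [lap, Fin.sum_univ_two]
  rw [this]
  exact ((hc.fderiv_apply ℝ _).fderiv_apply ℝ _).add ((hc.fderiv_apply ℝ _).fderiv_apply ℝ _)

lemma ibp2 (u ψ : E2 → ℝ) (hu : ContDiff ℝ 2 u) (hψ : ContDiff ℝ 2 ψ) (hc : HasCompactSupport ψ) :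
    ∫ x, u x * lap ψ x = ∫ x, lap u x * ψ x := by
  unfold lap
  simp only [Finset.mul_sum, Finset.sum_mul]
  rw [integral_finset_sum, integral_finset_sum]
  · refine Finset.sum_congr rfl fun i _ => ?_
    set v : E2 := EuclideanSpace.single i 1
    rw [ibp1 u (fun y => fderiv ℝ ψ y v) (hu.of_le (by norm_num)) (cd_fderiv ψ hψ v) (hc.fderiv_apply ℝ v) v]
    rw [ibp1 (fun y => fderiv ℝ u y v) ψ (cd_fderiv u hu v) (hψ.of_le (by norm_num)) hc v, neg_neg]
  · intro i _
    exact ((cont_dd u hu _).mul hψ.continuous).integrable_of_hasCompactSupport hc.mul_left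
  · intro i _
    exact (hu.continuous.mul (cont_dd ψ hψ _)).integrable_of_hasCompactSupport
      ((hc.fderiv_apply ℝ _).fderiv_apply ℝ _).mul_left

def La (a : ℝ) (x : E2) : ℝ := (1/2) * log (‖x‖^2 + a)

lemma La_cd (a : ℝ) (ha : 0 < a) : ContDiff ℝ 2 (La a) := by
  unfold La
  refine contDiff_const.mul (ContDiff.log ?_ fun x => by positivity)
  exact (contDiff_norm_sq ℝ).add contDiff_const

lemma La_fderiv (a : ℝ) (ha : 0 < a) (x v : E2) :
    fderiv ℝ (La a) x v = inner ℝ x v / (‖x‖^2 + a) := by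
  have h1 : HasFDerivAt (fun x : E2 => ‖x‖^2 + a) (2 • (innerSL ℝ x)) x :=
    (hasStrictFDerivAt_norm_sq x).hasFDerivAt.add_const a
  have h2 := (h1.log (by positivity)).const_mul (1/2)
  have h3 : HasFDerivAt (La a) _ x := h2
  rw [h3.fderiv]
  simp
  field_simp

lemma La_dd (a : ℝ) (ha : 0 < a) (x v : E2) :
    fderiv ℝ (fun y => fderiv ℝ (La a) y v) x v =
      (‖v‖^2 * (‖x‖^2 + a) - 2 * (inner ℝ x v)^2) / (‖x‖^2 + a)^2 := by
  have h0 : (fun y => fderiv ℝ (La a) y v) = fun y => inner ℝ y v / (‖y‖^2 + a) := by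
    funext y; exact La_fderiv a ha y v
  rw [h0]
  have h1 : HasFDerivAt (fun x : E2 => ‖x‖^2 + a) (2 • (innerSL ℝ x)) x :=
    (hasStrictFDerivAt_norm_sq x).hasFDerivAt.add_const a
  have h2 : HasFDerivAt (fun y : E2 => inner ℝ y v) (innerSL ℝ v) x := by
    have := (innerSL ℝ v).hasFDerivAt (x := x)
    refine this.congr_of_eventuallyEq (Eventually.of_forall fun y => ?_)
    simp [real_inner_comm]
  have hne : ‖x‖^2 + a ≠ 0 := by positivity
  have h4 := (hasDerivAt_inv hne).comp_hasFDerivAt x h1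
  have h3 : HasFDerivAt (fun y : E2 => inner ℝ y v * (‖y‖^2 + a)⁻¹) _ x := h2.mul h4
  simp only [div_eq_mul_inv]
  rw [h3.fderiv]
  simp
  field_simp
  ring

lemma La_lap (a : ℝ) (ha : 0 < a) (x : E2) : lap (La a) x = 2 * a / (‖x‖^2 + a)^2 := by
  unfold lap
  simp only [La_dd a ha, Fin.sum_univ_two]
  have h : ‖x‖^2 = x 0 ^ 2 + x 1 ^ 2 := by
    rw [EuclideanSpace.norm_sq_eq]; simp [Fin.sum_univ_two]
  simp only [EuclideanSpace.norm_single, EuclideanSpace.inner_single_right]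
  rw [← add_div]
  congr 1
  simp
  rw [h]; ring

def P (r : ℝ) : ℝ := 2 / (r^2 + 1)^2

lemma P_aux : IntegrableOn (fun r : ℝ => r * P r) (Set.Ioi 0) ∧ ∫ r in Set.Ioi (0:ℝ), r * P r = 1 := by
  have hd : ∀ r : ℝ, HasDerivAt (fun r : ℝ => - (r^2+1)⁻¹) (r * P r) r := by
    intro r
    have h1 : HasDerivAt (fun r : ℝ => r^2+1) (2 * r) r := by
      simpa using (hasDerivAt_pow 2 r).add_const 1
    have h2 := (h1.fun_inv (by positivity)).fun_neg
    refine h2.congr_deriv ?_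
    unfold P; field_simp
  have ht : Tendsto (fun r : ℝ => - (r^2+1)⁻¹) atTop (𝓝 0) := by
    rw [← neg_zero]
    refine Tendsto.neg (Tendsto.inv_tendsto_atTop ?_)
    exact tendsto_atTop_add_const_right _ _ (tendsto_pow_atTop two_ne_zero)
  have hi : IntegrableOn (fun r : ℝ => r * P r) (Set.Ioi 0) :=
    integrableOn_Ioi_deriv_of_nonneg' (fun r _ => hd r)
      (fun r hr => by have : 0 < r := hr; unfold P; positivity) ht
  refine ⟨hi, ?_⟩
  rw [integral_Ioi_of_hasDerivAt_of_tendsto' (fun r _ => hd r) hi ht]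
  norm_num

lemma P_int : Integrable (fun z : E2 => P ‖z‖) := by
  rw [integrable_fun_norm_addHaar (volume : Measure E2) (f := P), finrank_E2]
  simpa using P_aux.1

lemma P_val : ∫ z : E2, P ‖z‖ = 2 * π := by
  rw [integral_fun_norm_addHaar (volume : Measure E2) P, finrank_E2]
  have : ∫ y in Set.Ioi (0:ℝ), y ^ (2-1) • P y = 1 := by simpa using P_aux.2
  rw [this, Measure.real, EuclideanSpace.volume_ball_fin_two]
  simp [pi_pos.le]

lemma scale (ψ : E2 → ℝ) (e : ℝ) (he : 0 < e) :
    ∫ x, lap (La (e^2)) x * ψ x = ∫ z : E2, P ‖z‖ * ψ (e • z) := by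
  have h := Measure.integral_comp_smul (volume : Measure E2) (fun x => lap (La (e^2)) x * ψ x) e
  rw [finrank_E2, abs_of_pos (by positivity), smul_eq_mul] at h
  have h2 : ∫ x, lap (La (e^2)) x * ψ x = e^2 * ∫ z : E2, lap (La (e^2)) (e • z) * ψ (e • z) := by
    rw [h]; field_simp
  rw [h2, ← integral_const_mul]
  congr 1; funext z
  rw [La_lap _ (by positivity), norm_smul, Real.norm_eq_abs, abs_of_pos he]
  unfold P
  field_simp

lemma kk_int : Integrable kk := by
  simpa using kk_pow_integrable 1 one_pos

lemma abs_log_le (x : E2) : |log ‖x‖| ≤ log⁺ ‖x‖ + kk x := by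
  rw [log_eq, abs_le]
  have h1 := kk_nonneg x
  have h2 : 0 ≤ log⁺ ‖x‖ := posLog_nonneg
  constructor <;> linarith

lemma fund (ψ : E2 → ℝ) (hψ : ContDiff ℝ 2 ψ) (hc : HasCompactSupport ψ) :
    ∫ x : E2, log ‖x‖ * lap ψ x = 2 * π * ψ 0 := by
  have hcl := cont_lap ψ hψ
  have hsl := supp_lap ψ hc
  obtain ⟨C, hC⟩ := hcl.bounded_above_of_compact_support hsl
  obtain ⟨D, hD⟩ := hψ.continuous.bounded_above_of_compact_support hc
  have hC0 : 0 ≤ C := (norm_nonneg _).trans (hC 0)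
  set s : ℕ → ℝ := fun n => 1 / ((n:ℝ)+1)
  have hs : Tendsto s atTop (𝓝 0) := tendsto_one_div_add_atTop_nhds_zero_nat
  have hs0 : ∀ n, 0 < s n := fun n => by positivity
  have hs1 : ∀ n, s n ≤ 1 := fun n => by
    simp only [s]
    rw [div_le_one (by positivity)]; linarith [(n.cast_nonneg : (0:ℝ) ≤ n)]
  have hL : Tendsto (fun n => ∫ x, La (s n ^ 2) x * lap ψ x) atTop (𝓝 (∫ x, log ‖x‖ * lap ψ x)) := by
    refine tendsto_integral_of_dominated_convergence
      (fun x => log (2 + ‖x‖) * ‖lap ψ x‖ + C * kk x) ?_ ?_ ?_ ?_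
    · exact fun n => ((La_cd _ (pow_pos (hs0 n) 2)).continuous.mul hcl).aestronglyMeasurable
    · refine Integrable.add ?_ (kk_int.const_mul C)
      refine Continuous.integrable_of_hasCompactSupport ?_ hsl.norm.mul_left
      refine Continuous.mul (Continuous.log (by fun_prop) fun x => by positivity) hcl.norm
    · intro n
      have : ∀ᵐ x : E2, x ≠ 0 := by simp [ae_iff]
      filter_upwards [this] with x hx
      have hx' := norm_pos_iff.2 hx
      have h1 : La (s n ^ 2) x ≤ log (2 + ‖x‖) := by
        unfold La
        have : log (‖x‖^2 + s n ^ 2) ≤ log ((2 + ‖x‖)^2) := by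
          refine Real.log_le_log (by positivity) ?_
          nlinarith [hs0 n, hs1 n]
        rw [Real.log_pow] at this
        push_cast at this; linarith
      have h2 : log ‖x‖ ≤ La (s n ^ 2) x := by
        unfold La
        have : log (‖x‖^2) ≤ log (‖x‖^2 + s n ^ 2) := by
          refine Real.log_le_log (by positivity) ?_
          nlinarith [hs0 n, hs1 n]
        rw [Real.log_pow] at this
        push_cast at this; linarith
      have h3 : - kk x ≤ log ‖x‖ := by
        rw [log_eq]; linarith [posLog_nonneg (x := ‖x‖)]
      have h4 : 0 ≤ log (2 + ‖x‖) := Real.log_nonneg (by linarith)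
      have h5 := kk_nonneg x
      have h6 : |La (s n ^ 2) x| ≤ log (2 + ‖x‖) + kk x := by
        rw [abs_le]; constructor <;> linarith
      rw [norm_mul, Real.norm_eq_abs (La _ _)]
      calc _ ≤ (log (2 + ‖x‖) + kk x) * ‖lap ψ x‖ := by gcongr
        _ ≤ _ := by nlinarith [hC x]
    · have : ∀ᵐ x : E2, x ≠ 0 := by simp [ae_iff]
      filter_upwards [this] with x hx
      have hx' := norm_pos_iff.2 hx
      refine Tendsto.mul_const _ ?_
      unfold La
      have h1 : Tendsto (fun n => ‖x‖^2 + s n ^ 2) atTop (𝓝 (‖x‖^2)) := by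
        simpa using (hs.pow 2).const_add (‖x‖^2)
      have h2 := (h1.log (by positivity)).const_mul (1/2)
      rw [Real.log_pow] at h2
      convert h2 using 2
      push_cast; ring
  have hR : Tendsto (fun n => ∫ z : E2, P ‖z‖ * ψ (s n • z)) atTop (𝓝 (∫ z : E2, P ‖z‖ * ψ 0)) := by
    refine tendsto_integral_of_dominated_convergence (fun z => P ‖z‖ * D) ?_ (P_int.mul_const D) ?_ ?_
    · intro n
      refine P_int.1.mul ?_
      have := hψ.continuous
      exact (by fun_prop : Continuous fun z => ψ (s n • z)).aestronglyMeasurable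
    · refine fun n => ae_of_all _ fun z => ?_
      have : 0 ≤ P ‖z‖ := by unfold P; positivity
      rw [norm_mul, Real.norm_eq_abs (P _), abs_of_nonneg this]
      gcongr
      exact hD _
    · refine ae_of_all _ fun z => Tendsto.const_mul _ ?_
      have h1 : Tendsto (fun n => s n • z) atTop (𝓝 0) := by simpa using hs.smul_const z
      exact (hψ.continuous.tendsto 0).comp h1
  have heq : ∀ n, ∫ x, La (s n ^ 2) x * lap ψ x = ∫ z : E2, P ‖z‖ * ψ (s n • z) := by
    intro n
    rw [ibp2 _ ψ (La_cd _ (pow_pos (hs0 n) 2)) hψ hc, scale ψ _ (hs0 n)]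
  simp only [heq] at hL
  rw [tendsto_nhds_unique hL hR, integral_mul_const, P_val]

lemma fund' (φ : E2 → ℝ) (hφ : ContDiff ℝ 2 φ) (hc : HasCompactSupport φ) (y : E2) :
    ∫ x : E2, log ‖x - y‖ * lap φ x = 2 * π * φ y := by
  have h := fund (fun x => φ (x + y)) (by fun_prop) (hc.comp_homeomorph (Homeomorph.addRight y))
  have hl : ∀ x, lap (fun x => φ (x + y)) x = lap φ (x + y) := by
    intro x
    unfold lap
    refine Finset.sum_congr rfl fun i _ => ?_
    simp only [fderiv_comp_add_right]
    rw [fderiv_comp_add_right (f := fun z => fderiv ℝ φ z (EuclideanSpace.single i 1))]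
  simp only [hl, zero_add] at h
  rw [← h, ← integral_add_right_eq_self (fun x => log ‖x - y‖ * lap φ x) y]
  simp

lemma prod_int (f : E2 → ℝ) (hmeas : Measurable f) (hf : Integrable f)
    (hlog : Integrable (fun y : E2 => |f y| * log (2 + ‖y‖)))
    (g : E2 → ℝ) (hg : Continuous g) (hc : HasCompactSupport g) :
    Integrable (fun z : E2 × E2 => log ‖z.1 - z.2‖ * f z.2 * g z.1) (volume.prod volume) := by
  obtain ⟨C, hC⟩ := hg.bounded_above_of_compact_support hc
  have h1 : Integrable (fun x => log (2 + ‖x‖) * ‖g x‖) := by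
    refine Continuous.integrable_of_hasCompactSupport ?_ hc.norm.mul_left
    refine Continuous.mul (Continuous.log (by fun_prop) fun x => by positivity) hg.norm
  have h2 : Integrable (fun x => ‖g x‖) := hg.norm.integrable_of_hasCompactSupport hc.norm
  have h3 : Integrable (fun z : E2 × E2 => |f z.2| * kk (z.1 - z.2)) (volume.prod volume) :=
    hf.abs.convolution_integrand (ContinuousLinearMap.mul ℝ ℝ) kk_int
  refine (((h1.mul_prod hf.abs).add (h2.mul_prod hlog)).add (h3.const_mul C)).mono' ?_ ?_
  · refine Measurable.aestronglyMeasurable ?_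
    have := hg.measurable
    have := Real.measurable_log
    fun_prop
  · refine ae_of_all _ fun ⟨x, y⟩ => ?_
    simp only [Pi.add_apply]
    rw [norm_mul, norm_mul, Real.norm_eq_abs (log _), Real.norm_eq_abs (f y)]
    have h4 : |log ‖x - y‖| ≤ log (2 + ‖x‖) + log (2 + ‖y‖) + kk (x - y) :=
      (abs_log_le _).trans (by linarith [pl_bound x y])
    have h5 : 0 ≤ |f y| * kk (x - y) := mul_nonneg (abs_nonneg _) (kk_nonneg _)
    calc _ ≤ (log (2 + ‖x‖) + log (2 + ‖y‖) + kk (x - y)) * |f y| * ‖g x‖ := by gcongr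
      _ ≤ _ := by nlinarith [mul_le_mul_of_nonneg_right (hC x) h5]

lemma distrib (f : E2 → ℝ) (hmeas : Measurable f) (hf : Integrable f)
    (hlog : Integrable (fun y : E2 => |f y| * log (2 + ‖y‖)))
    (φ : E2 → ℝ) (hφ : ContDiff ℝ 2 φ) (hc : HasCompactSupport φ) :
    ∫ x : E2, (-(1/(2*π)) * ∫ y : E2, log ‖x - y‖ * f y) * lap φ x
        = - ∫ x : E2, f x * φ x := by
  have h1 : ∀ x : E2, (-(1/(2*π)) * ∫ y : E2, log ‖x - y‖ * f y) * lap φ x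
      = -(1/(2*π)) * ∫ y : E2, log ‖x - y‖ * f y * lap φ x := by
    intro x
    rw [integral_mul_const]; ring
  simp only [h1]
  rw [integral_const_mul, integral_integral_swap
    (prod_int f hmeas hf hlog (lap φ) (cont_lap φ hφ) (supp_lap φ hc))]
  have h2 : ∀ y : E2, ∫ x : E2, log ‖x - y‖ * f y * lap φ x = 2 * π * (f y * φ y) := by
    intro y
    rw [show 2 * π * (f y * φ y) = f y * (2 * π * φ y) by ring, ← fund' φ hφ hc y,
      ← integral_const_mul]
    congr 1; funext x; ring
  simp only [h2]
  rw [integral_const_mul]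
  field_simp

theorem stmt7 (f : E2 → ℝ) (hmeas : Measurable f) (hf : Integrable f)
    (hlog : Integrable (fun y : E2 => |f y| * log (2 + ‖y‖)))
    (hzero : ∫ y, f y = 0) (p : ℝ) (hp : 1 < p)
    (hloc : ∀ s : Set E2, IsCompact s → IntegrableOn (fun x => |f x| ^ p) s) :
    Continuous (fun x : E2 => -(1/(2*π)) * ∫ y : E2, log ‖x - y‖ * f y) ∧
    (∀ φ : E2 → ℝ, ContDiff ℝ (⊤ : ℕ∞) φ → HasCompactSupport φ →
      ∫ x : E2, (-(1/(2*π)) * ∫ y : E2, log ‖x - y‖ * f y) * lap φ x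
        = - ∫ x : E2, f x * φ x) ∧
    (∀ β : ℝ, 0 < β →
      Integrable (fun x : E2 => |f x| ^ p * (1 + ‖x‖) ^ (2*β*p + 2*(p-1))) →
      Tendsto (fun x : E2 => -(1/(2*π)) * ∫ y : E2, log ‖x - y‖ * f y)
        (cocompact E2) (nhds 0)) := by
  refine ⟨?_, ?_, ?_⟩
  · simp only [w_split f hmeas hf hlog p hp hloc]
    exact continuous_const.mul ((A_cont f hmeas hf hlog).sub (B_cont f hmeas hf p hp hloc))
  · intro φ hφ hc
    exact distrib f hmeas hf hlog φ (hφ.of_le (WithTop.coe_le_coe.2 (le_top : (2:ℕ∞) ≤ ⊤))) hc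
  · intro β hβ h
    simp only [w_split f hmeas hf hlog p hp hloc]
    have := ((A_tendsto f hmeas hf hlog hzero).sub
      (B_tendsto f hmeas hf p hp (glob_of_weight f hmeas p hp β hβ h))).const_mul (-(1/(2*π)))
    simpa using this
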